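/- arXiv:2603.04357 — 3 statements merged into one kernel-verified Lean document; each statement's English description precedes it below -/
import Mathlib

section
/- Let n ≥ 1 and 0 ≤ k ≤ n−1, and let M_k be the Pauli string consisting of X-factors on the first k qubits. Then, modulo the stabilizer group S of the [[n,1]] Z-type repetition code, the weight enumerator of the coset (M_k + X̄) + S equals g_{n−k,n}(x,y), and the weight enumerator of the coset (M_k + Ȳ) + S also equals g_{n−k,n}(x,y) = (1/2)·(x+y)^k·(2y)^(n−k), for all real x, y. -/
/-!
The weight monomial `x ^ (n - wt v) * y ^ wt v` is a product over the qubits, and `(1 + χ) / 2`,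
with `χ` the sign character of `ZMod 2`, is the indicator of even parity. The enumerator of a coset
`p + S` is therefore half the sum of two products over the qubits: with `w I = x` and `w P = y` for
`P ≠ I`, the factors at qubit `i` are `w (p i) + w (p i + Z)` and `w (p i) - w (p i + Z)`. A qubit
on which `p` has an X-factor contributes `2 * y` to the first product and `0` to the second; any
other qubit contributes `x + y` to the first. So as soon as `p` has an X-factor somewhere, the
enumerator depends only on the number of such qubits, which is `n - k` for both `M_k + X̄` and
`M_k + Ȳ`.
-/

/-- The weight of an `n`-qubit Pauli string: the number of non-identity tensor factors. -/
def wt {n : ℕ} (v : Fin n → ZMod 2 × ZMod 2) : ℕ :=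
  (Finset.univ.filter fun i => v i ≠ (0, 0)).card

/-- The weight enumerator of a finite set of `n`-qubit Pauli strings. -/
noncomputable def enum {n : ℕ} (T : Finset (Fin n → ZMod 2 × ZMod 2)) (x y : ℝ) : ℝ :=
  ∑ v ∈ T, x ^ (n - wt v) * y ^ wt v

/-- The stabilizer group of the `[[n,1]]` Z-type repetition code: Pauli strings with no
X-part and even total Z-weight. -/
def repStab (n : ℕ) : Finset (Fin n → ZMod 2 × ZMod 2) :=
  Finset.univ.filter fun v => (∀ i, (v i).1 = 0) ∧ (∑ i, (v i).2) = 0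

/-- The logical-X representative: `X^{⊗n}`. -/
def Xbar (n : ℕ) : Fin n → ZMod 2 × ZMod 2 := fun _ => (1, 0)

/-- The logical-Y representative: `Y ⊗ X^{⊗(n-1)}`. -/
def Ybar (n : ℕ) : Fin n → ZMod 2 × ZMod 2 :=
  fun i => if (i : ℕ) = 0 then (1, 1) else (1, 0)

/-- `Mk n k`: the Pauli string with X-factors on the first `k` qubits. -/
def Mk (n k : ℕ) : Fin n → ZMod 2 × ZMod 2 :=
  fun i => if (i : ℕ) < k then (1, 0) else (0, 0)

open Finset

section Enumeration

variable {ι R : Type*}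

theorem addChar_sum_eq_prod {A M : Type*} [AddCommMonoid A] [CommMonoid M] (ψ : AddChar A M)
    (s : Finset ι) (a : ι → A) : ψ (∑ i ∈ s, a i) = ∏ i ∈ s, ψ (a i) :=
  map_prod ψ.toMonoidHom (fun i ↦ Multiplicative.ofAdd (a i)) s

variable [Fintype ι]

theorem pow_sub_hammingNorm_mul_pow_hammingNorm [CommMonoid R] {β : ι → Type*}
    [∀ i, DecidableEq (β i)] [∀ i, Zero (β i)] (v : ∀ i, β i) (x y : R) :
    x ^ (Fintype.card ι - hammingNorm v) * y ^ hammingNorm v =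
      ∏ i, if v i = 0 then x else y := by
  have hcard : #{i | v i = 0} = Fintype.card ι - hammingNorm v :=
    Nat.eq_sub_of_add_eq (card_filter_add_card_filter_not fun i ↦ v i = 0)
  rw [prod_ite, prod_const, prod_const, hcard, hammingNorm]

theorem sum_prod_zmod_two [DecidableEq ι] [CommSemiring R] (f : ι → ZMod 2 → R) :
    ∑ z : ι → ZMod 2, ∏ i, f i (z i) = ∏ i, (f i 0 + f i 1) := by
  rw [← Fintype.prod_sum]
  exact prod_congr rfl fun i _ ↦ Fin.sum_univ_two (f i)

variable [CommRing R]

variable (R) in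
/-- The sign character `a ↦ (-1) ^ a` of `ZMod 2`, used to detect parity. -/
def signChar : AddChar (ZMod 2) R :=
  AddChar.zmodChar 2 neg_one_sq

theorem signChar_one : signChar R 1 = -1 := by
  simp [signChar, AddChar.zmodChar_apply, ZMod.val_one]

theorem one_add_signChar (a : ZMod 2) : 1 + signChar R a = if a = 0 then 2 else 0 := by
  by_cases ha : a = 0
  · simp [ha, one_add_one_eq_two]
  · obtain rfl : a = 1 := Fin.eq_one_of_ne_zero a ha
    simp [signChar_one]

theorem two_mul_sum_prod_of_sum_eq_zero [DecidableEq ι] (f : ι → ZMod 2 → R) :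
    2 * ∑ z : ι → ZMod 2 with ∑ i, z i = 0, ∏ i, f i (z i) =
      ∏ i, (f i 0 + f i 1) + ∏ i, (f i 0 - f i 1) := by
  calc
    _ = ∑ z : ι → ZMod 2, (1 + signChar R (∑ i, z i)) * ∏ i, f i (z i) := by
      simp only [one_add_signChar, ite_mul, zero_mul, sum_filter, mul_sum, mul_ite, mul_zero]
    _ = ∑ z : ι → ZMod 2, ∏ i, f i (z i) +
        ∑ z : ι → ZMod 2, ∏ i, signChar R (z i) * f i (z i) := by
      simp only [add_mul, one_mul, sum_add_distrib, addChar_sum_eq_prod, prod_mul_distrib]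
    _ = _ := by
      rw [sum_prod_zmod_two, sum_prod_zmod_two fun i a ↦ signChar R a * f i a]
      simp only [AddChar.map_zero_eq_one, signChar_one, one_mul, neg_one_mul, sub_eq_add_neg]

end Enumeration

section PauliString

variable {n : ℕ}

/-- The X-part of a Pauli string, recording the qubits on which it acts as `X` or `Y`. -/
def xPart (p : Fin n → ZMod 2 × ZMod 2) : Fin n → ZMod 2 :=
  fun i ↦ (p i).1

/-- The Pauli string of Z-factors recorded by `z`. -/
def zString (z : Fin n → ZMod 2) : Fin n → ZMod 2 × ZMod 2 :=
  fun i ↦ (0, z i)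

theorem zString_injective : Function.Injective (zString (n := n)) :=
  fun _ _ h ↦ funext fun i ↦ congrArg Prod.snd (congrFun h i)

theorem repStab_eq_image_zString :
    repStab n = ({z | ∑ i, z i = 0} : Finset (Fin n → ZMod 2)).image zString := by
  ext v
  simp only [repStab, mem_filter, mem_univ, true_and, mem_image]
  constructor
  · rintro ⟨hx, hz⟩
    exact ⟨fun i ↦ (v i).2, hz, funext fun i ↦ Prod.ext (hx i).symm rfl⟩
  · rintro ⟨z, hz, rfl⟩
    exact ⟨fun _ ↦ rfl, hz⟩

/-- The factor, `x` or `y`, that a single-qubit Pauli operator contributes to the monomial of a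
Pauli string in the weight enumerator. -/
def pauliFactor {R : Type*} (x y : R) (a : ZMod 2 × ZMod 2) : R :=
  if a = 0 then x else y

theorem enum_eq_sum_prod_pauliFactor (T : Finset (Fin n → ZMod 2 × ZMod 2)) (x y : ℝ) :
    enum T x y = ∑ v ∈ T, ∏ i, pauliFactor x y (v i) := by
  refine sum_congr rfl fun v _ ↦ ?_
  simp only [pauliFactor]
  rw [← pow_sub_hammingNorm_mul_pow_hammingNorm, Fintype.card_fin]
  rfl

theorem two_mul_enum_coset_repStab (p : Fin n → ZMod 2 × ZMod 2) (x y : ℝ) :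
    2 * enum ((repStab n).image fun s ↦ p + s) x y =
      ∏ i, (pauliFactor x y (p i) + pauliFactor x y (p i + (0, 1))) +
        ∏ i, (pauliFactor x y (p i) - pauliFactor x y (p i + (0, 1))) := by
  rw [enum_eq_sum_prod_pauliFactor, sum_image (add_right_injective p).injOn,
    repStab_eq_image_zString, sum_image zString_injective.injOn]
  simp only [Pi.add_apply, zString]
  rw [two_mul_sum_prod_of_sum_eq_zero fun i a ↦ pauliFactor x y (p i + (0, a))]
  simp only [Prod.mk_zero_zero, add_zero]

theorem pauliFactor_of_fst_ne_zero {R : Type*} {a : ZMod 2 × ZMod 2} (ha : a.1 ≠ 0) (x y : R) :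
    pauliFactor x y a = y :=
  if_neg fun h ↦ ha (congrArg Prod.fst h)

theorem pauliFactor_add_pauliFactor_add_Z {R : Type*} [NonAssocSemiring R]
    (a : ZMod 2 × ZMod 2) (x y : R) :
    pauliFactor x y a + pauliFactor x y (a + (0, 1)) = if a.1 = 0 then x + y else 2 * y := by
  obtain ⟨a, b⟩ := a
  by_cases ha : a = 0
  · by_cases hb : b = 0
    · simp [pauliFactor, ha, hb]
    · obtain rfl : b = 1 := Fin.eq_one_of_ne_zero b hb
      simp [pauliFactor, ha, CharTwo.add_self_eq_zero, add_comm]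
  · simp [pauliFactor, ha, two_mul]

theorem enum_coset_repStab {p : Fin n → ZMod 2 × ZMod 2} (hp : xPart p ≠ 0) (x y : ℝ) :
    enum ((repStab n).image fun s ↦ p + s) x y =
      1 / 2 * (x + y) ^ (n - hammingNorm (xPart p)) * (2 * y) ^ hammingNorm (xPart p) := by
  obtain ⟨j, hj⟩ : ∃ j, (p j).1 ≠ 0 := Function.ne_iff.mp hp
  have hsum : ∏ i, (pauliFactor x y (p i) + pauliFactor x y (p i + (0, 1))) =
      (x + y) ^ (n - hammingNorm (xPart p)) * (2 * y) ^ hammingNorm (xPart p) := by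
    have h := pow_sub_hammingNorm_mul_pow_hammingNorm (xPart p) (x + y) (2 * y)
    rw [Fintype.card_fin] at h
    rw [h]
    exact prod_congr rfl fun i _ ↦ pauliFactor_add_pauliFactor_add_Z (p i) x y
  have hdiff : ∏ i, (pauliFactor x y (p i) - pauliFactor x y (p i + (0, 1))) = 0 := by
    have hjZ : (p j + (0, 1)).1 ≠ 0 := by simpa using hj
    refine prod_eq_zero (mem_univ j) ?_
    rw [pauliFactor_of_fst_ne_zero hj, pauliFactor_of_fst_ne_zero hjZ, sub_self]
  linarith [two_mul_enum_coset_repStab p x y]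

theorem xPart_Mk_add_Xbar (n k : ℕ) :
    xPart (Mk n k + Xbar n) = fun i : Fin n ↦ if (i : ℕ) < k then 0 else 1 := by
  funext i
  simp only [xPart, Pi.add_apply, Mk, Xbar]
  split_ifs <;> simp [CharTwo.add_self_eq_zero]

theorem xPart_Mk_add_Ybar (n k : ℕ) : xPart (Mk n k + Ybar n) = xPart (Mk n k + Xbar n) := by
  funext i
  simp only [xPart, Pi.add_apply, Prod.fst_add, Ybar, Xbar, apply_ite Prod.fst, ite_self]

theorem hammingNorm_xPart_Mk_add_Xbar (n k : ℕ) :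
    hammingNorm (xPart (Mk n k + Xbar n)) = n - k := by
  have hcard := card_filter_add_card_filter_not (s := univ) fun i : Fin n ↦ (i : ℕ) < k
  rw [Fin.card_filter_val_lt, card_fin] at hcard
  have hnorm : hammingNorm (xPart (Mk n k + Xbar n)) = #{i : Fin n | ¬ (i : ℕ) < k} := by
    simp [hammingNorm, xPart_Mk_add_Xbar]
  omega

end PauliString

theorem weight_enumerator_Xbar_Ybar_cosets (n k : ℕ) (hn : 1 ≤ n) (hk : k ≤ n - 1)
    (x y : ℝ) :
    enum ((repStab n).image fun s => (Mk n k + Xbar n) + s) x y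
        = (1 / 2) * (x + y) ^ k * (2 * y) ^ (n - k) ∧
      enum ((repStab n).image fun s => (Mk n k + Ybar n) + s) x y
        = (1 / 2) * (x + y) ^ k * (2 * y) ^ (n - k) := by
  have hX := hammingNorm_xPart_Mk_add_Xbar n k
  have hX_ne : xPart (Mk n k + Xbar n) ≠ 0 := hammingNorm_ne_zero_iff.mp (by omega)
  have hXY := xPart_Mk_add_Ybar n k
  have hk' : n - (n - k) = k := by omega
  constructor
  · rw [enum_coset_repStab hX_ne, hX, hk']
  · rw [enum_coset_repStab (hXY ▸ hX_ne), hXY, hX, hk']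
end

section
/- Let m, n ≥ 1, let b : Fin m → ZMod 2 and k : Fin m → ℕ with k i ≤ n for all i. The weight enumerator of the stabilizer coset M(b,k) + S of the n×m concatenated bit- and phase-flip repetition code equals F^e_m(u, w) for all real x, y, where u i = h^{b i}_{k i, n}(x,y) and w i = h^{b i}_{n − k i, n}(x,y). -/
/-- The weight of a Pauli string on qubits indexed by `Fin m × Fin n`. -/
def wt2 {m n : ℕ} (v : Fin m × Fin n → ZMod 2 × ZMod 2) : ℕ :=
  (Finset.univ.filter fun p => v p ≠ (0, 0)).card

/-- The weight enumerator of a finite set of Pauli strings on `Fin m × Fin n`. -/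
noncomputable def enum2 {m n : ℕ} (T : Finset (Fin m × Fin n → ZMod 2 × ZMod 2))
    (x y : ℝ) : ℝ :=
  ∑ v ∈ T, x ^ (m * n - wt2 v) * y ^ wt2 v

/-- The stabilizer group of the `n × m` concatenated bit- and phase-flip repetition code:
even X-weight in each block, Z-part constant within each block, and the block Z-values
sum to zero. -/
def concatStab (m n : ℕ) : Finset (Fin m × Fin n → ZMod 2 × ZMod 2) :=
  Finset.univ.filter fun v =>
    (∀ i, ∑ j, (v (i, j)).1 = 0) ∧
    ∃ ζ : Fin m → ZMod 2, (∀ i j, (v (i, j)).2 = ζ i) ∧ ∑ i, ζ i = 0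

/-- `M(b,k)`: block `i` has X-part `b i` at position 0 (and 0 elsewhere) and Z-part 1 at
positions `j < k i` (and 0 elsewhere). -/
def Mbk (m n : ℕ) (b : Fin m → ZMod 2) (k : Fin m → ℕ) :
    Fin m × Fin n → ZMod 2 × ZMod 2 :=
  fun p => (if (p.2 : ℕ) = 0 then b p.1 else 0, if (p.2 : ℕ) < k p.1 then 1 else 0)

/-- The logical-Z representative: Z-part 1 at every position of block 0. -/
def ZbarC (m n : ℕ) : Fin m × Fin n → ZMod 2 × ZMod 2 :=
  fun p => (0, if (p.1 : ℕ) = 0 then 1 else 0)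

/-- The logical-X representative: X-part 1 at position 0 of every block. -/
def XbarC (m n : ℕ) : Fin m × Fin n → ZMod 2 × ZMod 2 :=
  fun p => (if (p.2 : ℕ) = 0 then 1 else 0, 0)

/-- The logical-Y representative. -/
def YbarC (m n : ℕ) : Fin m × Fin n → ZMod 2 × ZMod 2 :=
  XbarC m n + ZbarC m n

noncomputable def fe (n : ℕ) (x y : ℝ) : ℝ := ((x + y) ^ n + (x - y) ^ n) / 2

noncomputable def fo (n : ℕ) (x y : ℝ) : ℝ := ((x + y) ^ n - (x - y) ^ n) / 2

noncomputable def g (k n : ℕ) (x y : ℝ) : ℝ := (1 / 2) * (x + y) ^ (n - k) * (2 * y) ^ k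

/-- `h^b_{k,n}`. -/
noncomputable def hpol (b : ZMod 2) (k n : ℕ) (x y : ℝ) : ℝ :=
  if k = 0 then (if b = 0 then fe n x y else fo n x y) else g k n x y

noncomputable def Fe (m : ℕ) (u w : Fin m → ℝ) : ℝ :=
  ((∏ i, (u i + w i)) + ∏ i, (u i - w i)) / 2

noncomputable def Fo (m : ℕ) (u w : Fin m → ℝ) : ℝ :=
  ((∏ i, (u i + w i)) - ∏ i, (u i - w i)) / 2

/-!
The weight monomial is a product over qubits of a local factor: `x` at an identity, `y` elsewhere.
An element of the coset `M + S` is given by the X-parts of its blocks, which range independently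
over the binary vectors with the parity of the X-part of `M`, and by block Z-values `ζ` of total
parity zero, which shift the Z-parts of `M`. For fixed `ζ` the sum over the X-parts therefore
factors over the blocks.

Both the sum inside a block and the sum over `ζ` run over binary vectors of prescribed parity.
Writing the parity condition as the average of the two characters of `ZMod 2` turns such a sum of
products into `(∏ (F i 0 + F i 1) ± ∏ (F i 0 - F i 1)) / 2`. Inside a block, a qubit with Z-part `0`
contributes `x + y` and `x - y` to the two products, and a qubit with Z-part `1` contributes `2 * y`
and `0`, which gives `h^b_{K,n}` with `K` the number of qubits with Z-part `1`. Shifting the block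
by `ζ i = 1` replaces `K` by `n - K`.
-/

open Finset

section HammingNorm

variable {ι : Type*} [Fintype ι]

lemma prod_ite_eq_zero_eq_pow_hammingNorm {α M : Type*} [Zero α] [DecidableEq α] [CommMonoid M]
    (v : ι → α) (x y : M) :
    ∏ i, (if v i = 0 then x else y)
      = x ^ (Fintype.card ι - hammingNorm v) * y ^ hammingNorm v := by
  have hcard := card_filter_add_card_filter_not (s := (univ : Finset ι)) fun i => v i = 0
  rw [prod_ite, prod_const, prod_const, hammingNorm, ← card_univ, ← hcard, Nat.add_sub_cancel]

lemma hammingNorm_add_one (z : ι → ZMod 2) :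
    (hammingNorm fun i => z i + 1) = Fintype.card ι - hammingNorm z := by
  have hflip : ∀ c : ZMod 2, c + 1 ≠ 0 ↔ ¬ c ≠ 0 := by decide
  simp only [hammingNorm, hflip]
  exact Nat.eq_sub_of_add_eq' (card_filter_add_card_filter_not _)

end HammingNorm

section Parity

variable {ι R : Type*} [Fintype ι]

lemma zmod_two_eq_zero_or_eq_one : ∀ c : ZMod 2, c = 0 ∨ c = 1 := by decide

lemma sum_prod_zmod_two_eq_prod_add [DecidableEq ι] [CommSemiring R] (F : ι → ZMod 2 → R) :
    ∑ a : ι → ZMod 2, ∏ i, F i (a i) = ∏ i, (F i 0 + F i 1) := by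
  rw [← Fintype.prod_sum]
  exact prod_congr rfl fun i _ => Fin.sum_univ_two (F i)

variable [CommRing R]

/-- The sign character `c ↦ (-1) ^ c` of `ZMod 2`, used to detect the parity of binary vectors. -/
def paritySign (R : Type*) [CommRing R] : AddChar (ZMod 2) R :=
  AddChar.zmodChar 2 neg_one_sq

lemma paritySign_one : paritySign R 1 = -1 := pow_one _

lemma paritySign_sum (a : ι → ZMod 2) : paritySign R (∑ i, a i) = ∏ i, paritySign R (a i) :=
  map_prod (paritySign R).toMonoidHom (fun i => Multiplicative.ofAdd (a i)) univ

lemma one_add_paritySign_mul_paritySign (c d : ZMod 2) :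
    1 + paritySign R c * paritySign R d = if d = c then 2 else 0 := by
  rcases zmod_two_eq_zero_or_eq_one c with rfl | rfl <;>
    rcases zmod_two_eq_zero_or_eq_one d with rfl | rfl <;>
    simp [paritySign_one, one_add_one_eq_two]

lemma sum_paritySign_mul_prod [DecidableEq ι] (F : ι → ZMod 2 → R) :
    ∑ a : ι → ZMod 2, paritySign R (∑ i, a i) * ∏ i, F i (a i) = ∏ i, (F i 0 - F i 1) := by
  simp only [paritySign_sum, ← prod_mul_distrib]
  rw [sum_prod_zmod_two_eq_prod_add fun i c => paritySign R c * F i c]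
  simp only [AddChar.map_zero_eq_one, paritySign_one, one_mul, neg_mul, ← sub_eq_add_neg]

lemma two_mul_sum_prod_of_parity [DecidableEq ι] (F : ι → ZMod 2 → R) (c : ZMod 2) :
    2 * ∑ a : ι → ZMod 2 with ∑ i, a i = c, ∏ i, F i (a i)
      = ∏ i, (F i 0 + F i 1) + paritySign R c * ∏ i, (F i 0 - F i 1) := by
  rw [← sum_prod_zmod_two_eq_prod_add, ← sum_paritySign_mul_prod, mul_sum, mul_sum,
    ← sum_add_distrib, sum_filter]
  refine sum_congr rfl fun a _ => ?_
  rw [← mul_assoc, ← one_add_mul, one_add_paritySign_mul_paritySign, ite_zero_mul]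

lemma sum_prod_of_sum_eq_zero_eq_Fe {m : ℕ} (H : Fin m → ZMod 2 → ℝ) :
    ∑ ζ : Fin m → ZMod 2 with ∑ i, ζ i = 0, ∏ i, H i (ζ i)
      = Fe m (fun i => H i 0) (fun i => H i 1) := by
  rw [Fe, eq_div_iff two_ne_zero, mul_comm, two_mul_sum_prod_of_parity, AddChar.map_zero_eq_one,
    one_mul]

end Parity

section Block

/-- Since `0 ^ 0 = 1`, the factor `0 ^ K` merges the cases `K = 0` and `K ≠ 0` of `h^b_{K,n}`. -/
lemma hpol_eq_paritySign (b : ZMod 2) (K n : ℕ) (x y : ℝ) :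
    hpol b K n x y
      = ((x + y) ^ (n - K) * (2 * y) ^ K + paritySign ℝ b * ((x - y) ^ (n - K) * 0 ^ K)) / 2 := by
  rcases eq_or_ne K 0 with rfl | hK
  · rcases zmod_two_eq_zero_or_eq_one b with rfl | rfl <;>
      simp [hpol, fe, fo, paritySign_one, sub_eq_add_neg]
  · simp only [hpol, g, hK, if_false, zero_pow hK]
    ring

lemma sum_prod_pauliFactor_of_parity {ι : Type*} [Fintype ι] [DecidableEq ι] (b : ZMod 2)
    (z : ι → ZMod 2) (x y : ℝ) :
    ∑ a : ι → ZMod 2 with ∑ j, a j = b, ∏ j, (if (a j, z j) = 0 then x else y)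
      = hpol b (hammingNorm z) (Fintype.card ι) x y := by
  have hadd (j : ι) : (if ((0 : ZMod 2), z j) = 0 then x else y)
      + (if ((1 : ZMod 2), z j) = 0 then x else y) = if z j = 0 then x + y else 2 * y := by
    by_cases hz : z j = 0 <;> simp [hz, two_mul]
  have hsub (j : ι) : (if ((0 : ZMod 2), z j) = 0 then x else y)
      - (if ((1 : ZMod 2), z j) = 0 then x else y) = if z j = 0 then x - y else 0 := by
    by_cases hz : z j = 0 <;> simp [hz]
  rw [hpol_eq_paritySign, eq_div_iff two_ne_zero, mul_comm,
    two_mul_sum_prod_of_parity fun j c => if (c, z j) = 0 then x else y]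
  simp only [hadd, hsub, prod_ite_eq_zero_eq_pow_hammingNorm]

end Block

section Coset

variable {m n : ℕ}

/-- The X-parity of block `i` of a Pauli string. -/
def blockXParity (v : Fin m × Fin n → ZMod 2 × ZMod 2) (i : Fin m) : ZMod 2 :=
  ∑ j, (v (i, j)).1

/-- The number of qubits of block `i` at which a Pauli string has Z-part `1`. -/
def blockZWeight (v : Fin m × Fin n → ZMod 2 × ZMod 2) (i : Fin m) : ℕ :=
  hammingNorm fun j => (v (i, j)).2

/-- The Pauli string with X-part `a i` in block `i` whose Z-part there is that of `M` shifted by the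
block value `ζ i`; the elements of the coset of `M` are of this form. -/
def cosetElem (M : Fin m × Fin n → ZMod 2 × ZMod 2) (ζ : Fin m → ZMod 2)
    (a : Fin m → Fin n → ZMod 2) : Fin m × Fin n → ZMod 2 × ZMod 2 :=
  fun p => (a p.1 p.2, (M p).2 + ζ p.1)

lemma pow_wt2_eq_prod (v : Fin m × Fin n → ZMod 2 × ZMod 2) (x y : ℝ) :
    x ^ (m * n - wt2 v) * y ^ wt2 v = ∏ i, ∏ j, if v (i, j) = 0 then x else y := by
  rw [← Fintype.prod_prod_type fun p => if v p = 0 then x else y,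
    prod_ite_eq_zero_eq_pow_hammingNorm, Fintype.card_prod, Fintype.card_fin, Fintype.card_fin]
  rfl

lemma cosetElem_injective2 (hn : 1 ≤ n) (M : Fin m × Fin n → ZMod 2 × ZMod 2) :
    Function.Injective2 (cosetElem M) := by
  intro ζ ζ' a a' h
  have hparts (i : Fin m) (j : Fin n) : a i j = a' i j ∧ ζ i = ζ' i := by
    simpa [cosetElem] using congrFun h (i, j)
  exact ⟨funext fun i => (hparts i ⟨0, hn⟩).2, funext₂ fun i j => (hparts i j).1⟩

lemma image_add_concatStab (M : Fin m × Fin n → ZMod 2 × ZMod 2) :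
    ((concatStab m n).image fun s => M + s)
      = (({ζ | ∑ i, ζ i = 0} : Finset (Fin m → ZMod 2)) ×ˢ
          Fintype.piFinset fun i => {a | ∑ j, a j = blockXParity M i}).image
        (Function.uncurry (cosetElem M)) := by
  ext v
  simp only [mem_image, concatStab, mem_filter, mem_univ, true_and, mem_product,
    Fintype.mem_piFinset]
  constructor
  · rintro ⟨s, ⟨hX, ζ, hZ, hζ⟩, rfl⟩
    refine ⟨(ζ, fun i j => (M (i, j)).1 + (s (i, j)).1), ⟨hζ, fun i => ?_⟩, ?_⟩
    · rw [sum_add_distrib, hX, add_zero, blockXParity]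
    · funext p
      simp [cosetElem, Prod.ext_iff, ← hZ p.1 p.2]
  · rintro ⟨⟨ζ, a⟩, ⟨hζ, ha⟩, rfl⟩
    refine ⟨fun p => (a p.1 p.2 - (M p).1, ζ p.1), ⟨fun i => ?_, ζ, fun _ _ => rfl, hζ⟩, ?_⟩
    · rw [sum_sub_distrib, ha, blockXParity, sub_self]
    · funext p
      simp [cosetElem, Prod.ext_iff]

lemma sum_pow_wt2_cosetElem (M : Fin m × Fin n → ZMod 2 × ZMod 2) (ζ : Fin m → ZMod 2)
    (x y : ℝ) :
    ∑ a ∈ Fintype.piFinset fun i => {a | ∑ j, a j = blockXParity M i},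
        x ^ (m * n - wt2 (cosetElem M ζ a)) * y ^ wt2 (cosetElem M ζ a)
      = ∏ i, hpol (blockXParity M i) (hammingNorm fun j => (M (i, j)).2 + ζ i) n x y := by
  have hblock (i : Fin m) :=
    sum_prod_pauliFactor_of_parity (blockXParity M i) (fun j => (M (i, j)).2 + ζ i) x y
  simp only [Fintype.card_fin] at hblock
  simp only [pow_wt2_eq_prod, ← hblock, prod_univ_sum]
  rfl

lemma blockXParity_Mbk (hn : 1 ≤ n) (b : Fin m → ZMod 2) (k : Fin m → ℕ) (i : Fin m) :
    blockXParity (Mbk m n b k) i = b i := by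
  obtain ⟨n, rfl⟩ := Nat.exists_eq_add_of_le' hn
  simp [blockXParity, Mbk]

lemma blockZWeight_Mbk (b : Fin m → ZMod 2) (k : Fin m → ℕ) (i : Fin m) :
    blockZWeight (Mbk m n b k) i = min n (k i) := by
  simp [blockZWeight, hammingNorm, Mbk, Fin.card_filter_val_lt]

end Coset

theorem weight_enumerator_concat_coset_general {m n : ℕ} (hn : 1 ≤ n)
    (M : Fin m × Fin n → ZMod 2 × ZMod 2) (x y : ℝ) :
    enum2 ((concatStab m n).image fun s => M + s) x y
      = Fe m (fun i => hpol (blockXParity M i) (blockZWeight M i) n x y)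
          (fun i => hpol (blockXParity M i) (n - blockZWeight M i) n x y) := by
  calc enum2 ((concatStab m n).image fun s => M + s) x y
      = ∑ ζ : Fin m → ZMod 2 with ∑ i, ζ i = 0,
          ∏ i, hpol (blockXParity M i) (hammingNorm fun j => (M (i, j)).2 + ζ i) n x y := by
        rw [enum2, image_add_concatStab,
          sum_image (cosetElem_injective2 hn M).uncurry.injOn, sum_product]
        simp only [Function.uncurry_apply_pair, sum_pow_wt2_cosetElem]
    _ = _ := by
        rw [sum_prod_of_sum_eq_zero_eq_Fe fun i c =>
          hpol (blockXParity M i) (hammingNorm fun j => (M (i, j)).2 + c) n x y]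
        simp only [add_zero, hammingNorm_add_one, Fintype.card_fin, blockZWeight]

theorem weight_enumerator_concat_coset (m n : ℕ) (hm : 1 ≤ m) (hn : 1 ≤ n)
    (b : Fin m → ZMod 2) (k : Fin m → ℕ) (hk : ∀ i, k i ≤ n) (x y : ℝ) :
    enum2 ((concatStab m n).image fun s => Mbk m n b k + s) x y
      = Fe m (fun i => hpol (b i) (k i) n x y) (fun i => hpol (b i) (n - k i) n x y) := by
  simp only [weight_enumerator_concat_coset_general hn, blockXParity_Mbk hn, blockZWeight_Mbk,
    min_eq_right (hk _)]
end

section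
/- With S_RB defined from the coset weight enumerators of the [[5,1]] Z-type repetition code on the depolarizing channel, the inequalities S_RB(0.063452) < 1 and S_RB(0.063453) > 1 hold; consequently there exists p with 0.063452 < p < 0.063453 at which S_RB(p) = 1, i.e. the error threshold of the 5-qubit phase-flip repetition code (followed by random hashing) for the depolarizing channel lies strictly between 0.063452 and 0.063453. -/
/-!
Write `u = 1 - 2p` and `w = 2p`, so that `u + w = 1`. The function `N` obeys the Leibniz rule
`N (x y) = y N x + x N y` on all of `ℝ`. Applied to the factorizations
`u⁴ w + u w⁴ = u w (u³ + w³)` and `u³ w² + u² w³ = (u w)²`, it reduces `S_RB` to a combination, with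
coefficients polynomial in `u` and `w`, of the values of `N` at the six numbers `u`, `w`,
`(u⁵ ± (u - w)⁵) / 2`, `u⁵ + w⁵` and `u³ + w³`.

In natural logarithms, `(S_RB - 1) log 2` is about `-1.3 · 10⁻⁷` at `p = 0.063452` and `4.4 · 10⁻⁶`
at `p = 0.063453`, while the coefficients of the six logarithms have absolute values adding up to
less than `3`. Enclosing each logarithm to within `10⁻⁸` therefore decides both signs.
-/

/-- `N(t) = -t·log₂ t` (with `N(0) = 0` by Lean's conventions). -/
noncomputable def Nent (t : ℝ) : ℝ := -(t * Real.logb 2 t)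

/-- The entropy `S_RB` of the DiVincenzo–Shor–Smolin rate formula for the 5-qubit
phase-flip repetition code on the depolarizing channel with error probabilities
`(1-3p, p, p, p)`, computed from the coset weight enumerators of the `[[5,1]]`
Z-type repetition code evaluated at `(x, y) = (1-3p, p)`. -/
noncomputable def SRB (p : ℝ) : ℝ :=
  let u := 1 - 2 * p
  let w := 2 * p
  let fe := (u ^ 5 + (1 - 4 * p) ^ 5) / 2
  let fo := (u ^ 5 - (1 - 4 * p) ^ 5) / 2
  let g : ℕ → ℝ := fun k => (1 / 2) * u ^ (5 - k) * w ^ k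
  (Nent fe + Nent fo + 2 * Nent (g 5) + 10 * Nent (g 1) + 10 * Nent (g 4)
      + 20 * Nent (g 2) + 20 * Nent (g 3))
    - (Nent (u ^ 5 + w ^ 5) + 5 * Nent (u ^ 4 * w + u * w ^ 4)
      + 10 * Nent (u ^ 3 * w ^ 2 + u ^ 2 * w ^ 3))

open Real Finset

/-- The `n`-term partial sum of the series of `2 artanh ((y - 1) / (y + 1)) = log y`, which
converges for every `y > 0`, fastest near `y = 1`. -/
noncomputable def logSeries (n : ℕ) (y : ℝ) : ℝ :=
  2 * ∑ i ∈ range n, ((y - 1) / (y + 1)) ^ (2 * i + 1) / (2 * i + 1)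

lemma abs_log_sub_logSeries_le {y r : ℝ} (hy : 0 < y) (ht : |(y - 1) / (y + 1)| ≤ r) (hr : r < 1)
    (n : ℕ) : |log y - logSeries n y| ≤ 2 * (r ^ (2 * n + 1) / (1 - r ^ 2)) := by
  have hy_eq : (1 + (y - 1) / (y + 1)) / (1 - (y - 1) / (y + 1)) = y := by
    field_simp
    ring
  have hseries := sum_range_sub_log_div_le (ht.trans_lt hr) n
  rw [hy_eq] at hseries
  have hr_nonneg : 0 ≤ r := (abs_nonneg _).trans ht
  have hr_sq : 0 < 1 - r ^ 2 := by nlinarith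
  calc |log y - logSeries n y|
      = |2 * (1 / 2 * log y - ∑ i ∈ range n, ((y - 1) / (y + 1)) ^ (2 * i + 1) / (2 * i + 1))| := by
        rw [logSeries]
        ring_nf
    _ ≤ 2 * (|(y - 1) / (y + 1)| ^ (2 * n + 1) / (1 - |(y - 1) / (y + 1)| ^ 2)) := by
        rw [abs_mul, abs_two, sq_abs]
        gcongr
    _ ≤ 2 * (r ^ (2 * n + 1) / (1 - r ^ 2)) := by gcongr

lemma abs_log_sub_logSeries_seven_le {y : ℝ} (hy : y ∈ Set.Icc (2 / 3) (3 / 2)) :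
    |log y - logSeries 7 y| ≤ 1 / 10 ^ 10 := by
  obtain ⟨hy₁, hy₂⟩ := hy
  have ht : |(y - 1) / (y + 1)| ≤ 1 / 5 := by
    rw [abs_le, le_div_iff₀ (by linarith), div_le_iff₀ (by linarith)]
    constructor <;> linarith
  exact (abs_log_sub_logSeries_le (by linarith) ht (by norm_num) 7).trans (by norm_num)

/-- `287209 / 414355` is the approximation of `log 2` in `Real.log_two_near_10`. -/
lemma abs_log_sub_le_of_logSeries {x l ε : ℝ} (k : ℕ) (hx : 2 ^ k * x ∈ Set.Icc (2 / 3) (3 / 2))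
    (hl : |logSeries 7 (2 ^ k * x) - k * (287209 / 414355) - l| ≤ ε - (k + 1) / 10 ^ 10) :
    |log x - l| ≤ ε := by
  have hx_ne : x ≠ 0 := by
    rintro rfl
    norm_num at hx
  have hseries := abs_log_sub_logSeries_seven_le hx
  rw [log_mul (by positivity) hx_ne, log_pow] at hseries
  have hlog_two : |k * log 2 - k * (287209 / 414355)| ≤ k * (1 / 10 ^ 10) := by
    rw [← mul_sub, abs_mul, Nat.abs_cast]
    exact mul_le_mul_of_nonneg_left log_two_near_10 k.cast_nonneg
  rw [abs_le] at hl hseries hlog_two ⊢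
  constructor <;> linarith

lemma Nent_eq_negMulLog_div (t : ℝ) : Nent t = negMulLog t / log 2 := by
  simp only [Nent, logb, negMulLog]
  ring

lemma continuous_Nent : Continuous Nent := by
  simp only [funext Nent_eq_negMulLog_div]
  fun_prop

lemma Nent_one_half : Nent (1 / 2) = 1 / 2 := by
  simp [Nent]

lemma Nent_mul (x y : ℝ) : Nent (x * y) = y * Nent x + x * Nent y := by
  simp only [Nent_eq_negMulLog_div, negMulLog_mul]
  ring

lemma Nent_pow (x : ℝ) (n : ℕ) : Nent (x ^ n) = n * x ^ (n - 1) * Nent x := by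
  simp only [Nent, logb_pow]
  rcases n with _ | n
  · simp
  · rw [Nat.add_sub_cancel, pow_succ]
    ring

/-- A fair bit and five independent bits of bias `w` have joint entropy `1 + 5 (N u + N w)`; the
left side is this entropy without its two terms `N (u ^ 5 / 2)`. -/
lemma Nent_nontrivial_cosets_eq {u w : ℝ} (h : u + w = 1) :
    2 * Nent (1 / 2 * w ^ 5) + 10 * Nent (1 / 2 * (u ^ 4 * w)) + 10 * Nent (1 / 2 * (u * w ^ 4))
        + 20 * Nent (1 / 2 * (u ^ 3 * w ^ 2)) + 20 * Nent (1 / 2 * (u ^ 2 * w ^ 3)) =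
      1 - u ^ 5 + 5 * (Nent u + Nent w) - 5 * u ^ 4 * Nent u := by
  obtain rfl : w = 1 - u := by linarith
  simp only [Nent_mul, Nent_pow, Nent_one_half, Nat.cast_ofNat]
  ring

lemma Nent_syndromes_eq {u w : ℝ} (h : u + w = 1) :
    5 * Nent (u ^ 4 * w + u * w ^ 4) + 10 * Nent (u ^ 3 * w ^ 2 + u ^ 2 * w ^ 3) =
      5 * u * w * Nent (u ^ 3 + w ^ 3) + 5 * (1 + u * w) * (w * Nent u + u * Nent w) := by
  have h₁ : u ^ 4 * w + u * w ^ 4 = u * w * (u ^ 3 + w ^ 3) := by ring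
  have h₂ : u ^ 3 * w ^ 2 + u ^ 2 * w ^ 3 = (u * w) ^ 2 := by linear_combination (u * w) ^ 2 * h
  rw [h₁, h₂, Nent_mul, Nent_pow, Nent_mul]
  obtain rfl : w = 1 - u := by linarith
  push_cast
  ring

lemma SRB_eq {p u w : ℝ} (hu : u = 1 - 2 * p) (hw : w = 2 * p) :
    SRB p = 1 - u ^ 5 + Nent ((u ^ 5 + (u - w) ^ 5) / 2) + Nent ((u ^ 5 - (u - w) ^ 5) / 2)
      + 5 * u ^ 2 * w * (2 + u) * Nent u + 5 * w ^ 2 * (1 + u) * Nent w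
      - Nent (u ^ 5 + w ^ 5) - 5 * u * w * Nent (u ^ 3 + w ^ 3) := by
  have h : u + w = 1 := by linarith
  have hv : 1 - 4 * p = u - w := by linarith
  have hcosets := Nent_nontrivial_cosets_eq h
  have hsyndromes := Nent_syndromes_eq h
  simp only [SRB, ← hu, hv, mul_assoc (1 / 2 : ℝ), Nat.reduceSub, pow_zero, pow_one, one_mul]
  rw [← hw]
  obtain rfl : w = 1 - u := by linarith
  linear_combination hcosets - hsyndromes

/-- The closed form of `(S_RB - 1) log 2 = -5 Q log 2` in terms of `u = 1 - 2p` and `w = 2p`;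
natural logarithms avoid divisions by `log 2`. -/
noncomputable def entropyExcess (u w : ℝ) : ℝ :=
  negMulLog ((u ^ 5 + (u - w) ^ 5) / 2) + negMulLog ((u ^ 5 - (u - w) ^ 5) / 2)
    + 5 * u ^ 2 * w * (2 + u) * negMulLog u + 5 * w ^ 2 * (1 + u) * negMulLog w
    - negMulLog (u ^ 5 + w ^ 5) - 5 * u * w * negMulLog (u ^ 3 + w ^ 3) - u ^ 5 * log 2

lemma SRB_sub_one_eq {p u w : ℝ} (hu : u = 1 - 2 * p) (hw : w = 2 * p) :
    SRB p - 1 = entropyExcess u w / log 2 := by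
  have hlog : log 2 ≠ 0 := (log_pos one_lt_two).ne'
  simp only [SRB_eq hu hw, Nent_eq_negMulLog_div, entropyExcess]
  field_simp
  ring

lemma SRB_lt_one_iff {p u w : ℝ} (hu : u = 1 - 2 * p) (hw : w = 2 * p) :
    SRB p < 1 ↔ entropyExcess u w < 0 := by
  rw [← sub_neg, SRB_sub_one_eq hu hw, div_lt_iff₀ (log_pos one_lt_two), zero_mul]

lemma one_lt_SRB_iff {p u w : ℝ} (hu : u = 1 - 2 * p) (hw : w = 2 * p) :
    1 < SRB p ↔ 0 < entropyExcess u w := by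
  rw [← sub_pos, SRB_sub_one_eq hu hw, div_pos_iff_of_pos_right (log_pos one_lt_two)]

lemma continuous_SRB : Continuous SRB := by
  have := continuous_Nent
  unfold SRB
  fun_prop

lemma SRB_left_lt_one : SRB 0.063452 < 1 := by
  have hlog_u : |log 0.873096 - (-0.13570976)| ≤ 1 / 10 ^ 8 :=
    abs_log_sub_le_of_logSeries 0 (by norm_num) (by norm_num [logSeries, sum_range_succ])
  have hlog_w : |log 0.126904 - (-2.06432438)| ≤ 1 / 10 ^ 8 :=
    abs_log_sub_le_of_logSeries 3 (by norm_num) (by norm_num [logSeries, sum_range_succ])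
  have hlog_even : |log ((0.873096 ^ 5 + (0.873096 - 0.126904) ^ 5) / 2) - (-0.99601884)| ≤
      1 / 10 ^ 8 :=
    abs_log_sub_le_of_logSeries 1 (by norm_num) (by norm_num [logSeries, sum_range_succ])
  have hlog_odd : |log ((0.873096 ^ 5 - (0.873096 - 0.126904) ^ 5) / 2) - (-1.98045978)| ≤
      1 / 10 ^ 8 :=
    abs_log_sub_le_of_logSeries 3 (by norm_num) (by norm_num [logSeries, sum_range_succ])
  have hlog_pow_five : |log (0.873096 ^ 5 + 0.126904 ^ 5) - (-0.67848395)| ≤ 1 / 10 ^ 8 :=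
    abs_log_sub_le_of_logSeries 1 (by norm_num) (by norm_num [logSeries, sum_range_succ])
  have hlog_pow_three : |log (0.873096 ^ 3 + 0.126904 ^ 3) - (-0.40406328)| ≤ 1 / 10 ^ 8 :=
    abs_log_sub_le_of_logSeries 0 (by norm_num) (by norm_num [logSeries, sum_range_succ])
  have hlog_two := abs_le.1 log_two_near_10
  rw [abs_le] at hlog_u hlog_w hlog_even hlog_odd hlog_pow_five hlog_pow_three
  rw [SRB_lt_one_iff (u := 0.873096) (w := 0.126904) (by norm_num) (by norm_num)]
  simp only [entropyExcess, negMulLog]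
  linarith

lemma one_lt_SRB_right : 1 < SRB 0.063453 := by
  have hlog_u : |log 0.873094 - (-0.13571205)| ≤ 1 / 10 ^ 8 :=
    abs_log_sub_le_of_logSeries 0 (by norm_num) (by norm_num [logSeries, sum_range_succ])
  have hlog_w : |log 0.126906 - (-2.06430862)| ≤ 1 / 10 ^ 8 :=
    abs_log_sub_le_of_logSeries 3 (by norm_num) (by norm_num [logSeries, sum_range_succ])
  have hlog_even : |log ((0.873094 ^ 5 + (0.873094 - 0.126906) ^ 5) / 2) - (-0.99603510)| ≤
      1 / 10 ^ 8 :=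
    abs_log_sub_le_of_logSeries 1 (by norm_num) (by norm_num [logSeries, sum_range_succ])
  have hlog_odd : |log ((0.873094 ^ 5 - (0.873094 - 0.126906) ^ 5) / 2) - (-1.98045837)| ≤
      1 / 10 ^ 8 :=
    abs_log_sub_le_of_logSeries 3 (by norm_num) (by norm_num [logSeries, sum_range_succ])
  have hlog_pow_five : |log (0.873094 ^ 5 + 0.126906 ^ 5) - (-0.67849539)| ≤ 1 / 10 ^ 8 :=
    abs_log_sub_le_of_logSeries 1 (by norm_num) (by norm_num [logSeries, sum_range_succ])
  have hlog_pow_three : |log (0.873094 ^ 3 + 0.126906 ^ 3) - (-0.40406998)| ≤ 1 / 10 ^ 8 :=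
    abs_log_sub_le_of_logSeries 0 (by norm_num) (by norm_num [logSeries, sum_range_succ])
  have hlog_two := abs_le.1 log_two_near_10
  rw [abs_le] at hlog_u hlog_w hlog_even hlog_odd hlog_pow_five hlog_pow_three
  rw [one_lt_SRB_iff (u := 0.873094) (w := 0.126906) (by norm_num) (by norm_num)]
  simp only [entropyExcess, negMulLog]
  linarith

theorem five_rep_threshold_depolarizing :
    SRB 0.063452 < 1 ∧ SRB 0.063453 > 1 ∧
      ∃ p : ℝ, 0.063452 < p ∧ p < 0.063453 ∧ SRB p = 1 := by
  refine ⟨SRB_left_lt_one, one_lt_SRB_right, ?_⟩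
  obtain ⟨p, ⟨hp_left, hp_right⟩, hp⟩ := intermediate_value_Ioo (by norm_num)
    continuous_SRB.continuousOn ⟨SRB_left_lt_one, one_lt_SRB_right⟩
  exact ⟨p, hp_left, hp_right, hp⟩
end
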